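/- arXiv:1705.02228 — 3 statements merged into one kernel-verified Lean document; each statement's English description precedes it below -/
import Mathlib

section
/- Let γ ∈ L¹(ℝ) be a function that is not almost everywhere zero, whose Fourier transform γ̂ (with convention γ̂(ξ) = ∫_ℝ e^{−2πiξt} γ(t) dt) is real-valued, nonnegative, and supported in [0,1]. Then ∫_{−∞}^{0} e^{2πit} γ(t) dt ≠ 0, i.e. γ is non-degenerate. -/
open MeasureTheory Real Set Function
open scoped FourierTransform ENNReal NNReal

/-- `e2pi t = e^{2πit}`. -/
noncomputable def e2pi (t : ℝ) : ℂ := Complex.exp (2 * (Real.pi : ℂ) * Complex.I * (t : ℂ))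

/-- Convolution of two functions on `ℝ`. -/
noncomputable def conv (f g : ℝ → ℂ) (x : ℝ) : ℂ := ∫ t, f t * g (x - t)

lemma fourier_swap (f g : ℝ → ℂ) (hf : Integrable f) (hg : Integrable g) :
    ∫ ξ, 𝓕 f ξ * g ξ = ∫ x, f x * 𝓕 g x := by
  have := VectorFourier.integral_fourierIntegral_smul_eq_flip (L := innerₗ ℝ) (μ := volume)
    (ν := volume) Real.continuous_fourierChar continuous_inner hf hg
  simpa using! this

lemma fourierInv_swap (f g : ℝ → ℂ) (hf : Integrable f) (hg : Integrable g) :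
    ∫ ξ, 𝓕⁻ f ξ * g ξ = ∫ x, f x * 𝓕⁻ g x := by
  have h := fourier_swap f (fun x => g (-x)) hf hg.comp_neg
  rw [← integral_neg_eq_self] at h
  simp only [neg_neg] at h
  have h2 : 𝓕 (fun x => g (-x)) = 𝓕⁻ g := (Real.fourierInv_eq_fourier_comp_neg g).symm
  rw [h2] at h
  simpa only [Real.fourierInv_eq_fourier_neg f] using h

lemma cont_fourier (f : ℝ → ℂ) (hf : Integrable f) : Continuous (𝓕 f) :=
  VectorFourier.fourierIntegral_continuous Real.continuous_fourierChar continuous_inner hf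

lemma inv_ae (γ : ℝ → ℂ) (hInt : Integrable γ) (hg : Integrable (𝓕 γ)) :
    ∀ᵐ t, γ t = 𝓕⁻ (𝓕 γ) t := by
  have hc : Continuous (𝓕⁻ (𝓕 γ)) := by
    have : 𝓕⁻ (𝓕 γ) = fun t => 𝓕 (𝓕 γ) (-t) := by
      ext t; exact Real.fourierInv_eq_fourier_neg _ _
    rw [this]
    exact (cont_fourier _ hg).comp continuous_neg
  apply ae_eq_of_integral_contDiff_smul_eq hInt.locallyIntegrable hc.locallyIntegrable
  intro φ hφ hφc
  have hc2 : HasCompactSupport (fun x => (φ x : ℂ)) := hφc.comp_left (g := Complex.ofReal) (by simp)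
  have hd2 : ContDiff ℝ (⊤ : ℕ∞) (fun x => (φ x : ℂ)) := Complex.ofRealCLM.contDiff.comp hφ
  let Φ : SchwartzMap ℝ ℂ := hc2.toSchwartzMap hd2
  have hΦ : ∀ x, Φ x = φ x := fun x => rfl
  let Ψ : SchwartzMap ℝ ℂ := 𝓕⁻ Φ
  have e1 : 𝓕 (⇑Ψ) = Φ := by
    
    have : (𝓕 Ψ : SchwartzMap ℝ ℂ) = Φ := FourierTransform.fourier_fourierInv_eq Φ
    rw [← SchwartzMap.fourier_coe, this]
  calc ∫ x, φ x • γ x = ∫ x, γ x * 𝓕 (⇑Ψ) x := by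
        congr 1; ext x; rw [e1, hΦ, Complex.real_smul, mul_comm]
    _ = ∫ x, 𝓕 γ x * Ψ x := (fourier_swap _ _ hInt Ψ.integrable).symm
    _ = ∫ x, 𝓕 γ x * 𝓕⁻ (⇑Φ) x := by
        rw [← SchwartzMap.fourierInv_coe]
    _ = ∫ x, 𝓕⁻ (𝓕 γ) x * Φ x := (fourierInv_swap _ _ hg Φ.integrable).symm
    _ = _ := by congr 1; ext x; rw [hΦ, Complex.real_smul, mul_comm]

lemma fub (g : ℝ → ℂ) (hg : Integrable g) (ε : ℝ) (hε : 0 < ε) :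
    ∫ t in Set.Iic (0:ℝ), Complex.exp (ε * t) * (e2pi t * 𝓕⁻ g t) =
      ∫ ξ, g ξ * (1 / (ε + 2 * π * Complex.I * (1 + ξ))) := by
  have h0 : ∀ t : ℝ, Complex.exp (ε * t) * (e2pi t * 𝓕⁻ g t) =
      ∫ ξ, g ξ * Complex.exp ((ε + 2 * π * Complex.I * (1 + ξ)) * t) := by
    intro t
    rw [Real.fourierInv_eq', ← integral_const_mul, ← integral_const_mul]
    congr 1; ext ξ
    rw [e2pi, smul_eq_mul, ← mul_assoc, ← mul_assoc, ← Complex.exp_add, ← Complex.exp_add, mul_comm]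
    congr 2
    simp
    ring
  simp_rw [h0]
  rw [integral_integral_swap]
  · congr 1; ext ξ
    rw [integral_const_mul, integral_exp_mul_complex_Iic (by simpa using hε)]
    simp
  · have h1 := (integrableOn_exp_mul_Iic hε 0).norm.mul_prod hg.norm
    refine h1.mono ?_ ?_
    · apply AEStronglyMeasurable.mul
      · exact hg.aestronglyMeasurable.comp_snd
      · apply Continuous.aestronglyMeasurable; fun_prop
    · refine Filter.Eventually.of_forall fun p => ?_
      simp [Function.uncurry, Complex.norm_exp, mul_comm]

/-- if `γ ∈ L¹(ℝ)` is not a.e. zero and its Fourier transform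
`𝓕γ(ξ) = ∫ e^{-2πiξt} γ(t) dt` is real-valued, nonnegative and supported in `[0,1]`,
then `∫_{-∞}^0 e^{2πit} γ(t) dt ≠ 0`, i.e. `γ` is non-degenerate. -/
theorem statement0 (γ : ℝ → ℂ) (hInt : Integrable γ)
    (hne : ¬ (γ =ᵐ[volume] (0 : ℝ → ℂ)))
    (him : ∀ ξ : ℝ, (𝓕 γ ξ).im = 0) (hre : ∀ ξ : ℝ, 0 ≤ (𝓕 γ ξ).re)
    (hsupp : Function.support (𝓕 γ) ⊆ Set.Icc 0 1) :
    (∫ t in Set.Iic (0:ℝ), e2pi t * γ t) ≠ 0 := by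
  have hcont := cont_fourier γ hInt
  have hg : Integrable (𝓕 γ) := hcont.integrable_of_hasCompactSupport
    (HasCompactSupport.intro isCompact_Icc (fun x hx => by
      by_contra h; exact hx (hsupp h)))
  have hinv := inv_ae γ hInt hg
  have hn : ∀ t, ‖e2pi t‖ = 1 := by
    intro t; simp [e2pi, Complex.norm_exp]
  have hce : Continuous e2pi := by unfold e2pi; fun_prop
  -- left limit
  have hL : Filter.Tendsto (fun ε : ℝ => ∫ t in Set.Iic (0:ℝ), Complex.exp (ε * t) * (e2pi t * γ t))
      (nhdsWithin 0 (Set.Ioi 0)) (nhds (∫ t in Set.Iic (0:ℝ), e2pi t * γ t)) := by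
    apply tendsto_integral_filter_of_dominated_convergence (fun t => ‖γ t‖)
    · refine Filter.Eventually.of_forall fun ε => ?_
      apply AEStronglyMeasurable.mul
      · apply Continuous.aestronglyMeasurable; fun_prop
      · exact hce.aestronglyMeasurable.mul hInt.aestronglyMeasurable.restrict
    · filter_upwards [self_mem_nhdsWithin] with ε hε
      filter_upwards [ae_restrict_mem measurableSet_Iic] with t ht
      rw [norm_mul, norm_mul, hn, one_mul, Complex.norm_exp]
      have : Real.exp ((ε * t : ℂ).re) ≤ 1 := by
        simp only [Complex.mul_re, Complex.ofReal_re, Complex.ofReal_im, mul_zero, sub_zero]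
        exact Real.exp_le_one_iff.2 (mul_nonpos_of_nonneg_of_nonpos (le_of_lt hε) ht)
      exact mul_le_of_le_one_left (norm_nonneg _) this
    · exact hInt.norm.restrict
    · refine Filter.Eventually.of_forall fun t => ?_
      have : Continuous (fun ε : ℝ => Complex.exp (ε * t) * (e2pi t * γ t)) := by fun_prop
      simpa using (this.tendsto 0).mono_left nhdsWithin_le_nhds
  have hR : Filter.Tendsto (fun ε : ℝ => ∫ ξ, 𝓕 γ ξ * (1 / (ε + 2 * π * Complex.I * (1 + ξ))))
      (nhdsWithin 0 (Set.Ioi 0)) (nhds (∫ ξ, 𝓕 γ ξ * (1 / (2 * π * Complex.I * (1 + ξ))))) := by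
    apply tendsto_integral_filter_of_dominated_convergence (fun t => ‖𝓕 γ t‖)
    · refine Filter.Eventually.of_forall fun ε => ?_
      apply AEStronglyMeasurable.mul hcont.aestronglyMeasurable
      apply Measurable.aestronglyMeasurable; fun_prop
    · filter_upwards with ε
      filter_upwards with ξ
      by_cases h : 𝓕 γ ξ = 0
      · simp [h]
      have hξ := (hsupp h).1
      rw [norm_mul]
      apply mul_le_of_le_one_right (norm_nonneg _)
      rw [norm_div, norm_one]
      apply div_le_one_of_le₀ _ (norm_nonneg _)
      refine le_trans ?_ (Complex.abs_im_le_norm _)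
      refine le_trans ?_ (le_abs_self _)
      simp
      nlinarith [Real.pi_gt_three]
    · exact hg.norm
    · refine Filter.Eventually.of_forall fun ξ => ?_
      by_cases h : 𝓕 γ ξ = 0
      · simp [h]
      have hξ := (hsupp h).1
      have hne0 : (((0:ℝ):ℂ) + 2 * π * Complex.I * (1 + ξ)) ≠ 0 := by
        intro hh
        have := congrArg Complex.im hh
        simp at this
        nlinarith [Real.pi_gt_three]
      have : ContinuousAt (fun ε : ℝ => 𝓕 γ ξ * (1 / (ε + 2 * π * Complex.I * (1 + ξ)))) 0 := by
        fun_prop (disch := assumption)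
      simpa using this.tendsto.mono_left nhdsWithin_le_nhds
  have heq : ∫ t in Set.Iic (0:ℝ), e2pi t * γ t =
      ∫ ξ, 𝓕 γ ξ * (1 / (2 * π * Complex.I * (1 + ξ))) := by
    refine tendsto_nhds_unique hL (hR.congr' ?_)
    filter_upwards [self_mem_nhdsWithin] with ε hε
    rw [← fub _ hg ε hε]
    apply integral_congr_ae
    filter_upwards [ae_restrict_of_ae hinv] with t ht
    rw [← ht]
  have heq2 : ∫ ξ, 𝓕 γ ξ * (1 / (2 * π * Complex.I * (1 + ξ))) =
      (1 / (2 * π * Complex.I)) * ((∫ ξ, (𝓕 γ ξ).re / (1 + ξ) : ℝ) : ℂ) := by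
    rw [← integral_complex_ofReal, ← integral_const_mul]
    congr 1; ext ξ
    have : 𝓕 γ ξ = ((𝓕 γ ξ).re : ℂ) := by
      apply Complex.ext <;> simp [him]
    push_cast
    rw [← this]
    simp only [div_eq_mul_inv, mul_inv]; ring
  rw [heq, heq2]
  intro h0
  have h1 : ∫ ξ, (𝓕 γ ξ).re / (1 + ξ) = 0 := by
    rcases mul_eq_zero.1 h0 with h | h
    · exfalso; simp [Real.pi_ne_zero] at h
    · exact_mod_cast h
  have hnn : ∀ ξ, 0 ≤ (𝓕 γ ξ).re / (1 + ξ) := by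
    intro ξ
    by_cases h : 𝓕 γ ξ = 0
    · simp [h]
    have hξ := (hsupp h).1
    exact div_nonneg (hre ξ) (by linarith)
  have hint : Integrable (fun ξ => (𝓕 γ ξ).re / (1 + ξ)) := by
    refine hg.norm.mono ?_ ?_
    · apply Measurable.aestronglyMeasurable
      have := hcont.measurable
      fun_prop
    · filter_upwards with ξ
      by_cases h : 𝓕 γ ξ = 0
      · simp [h]
      have hξ := (hsupp h).1
      rw [norm_div, norm_norm]
      apply (div_le_self (norm_nonneg _) _).trans (Complex.abs_re_le_norm _)
      rw [Real.norm_of_nonneg] <;> linarith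
  have h2 := (integral_eq_zero_iff_of_nonneg hnn hint).1 h1
  have h3 : 𝓕 γ =ᵐ[volume] 0 := by
    filter_upwards [h2] with ξ hξ
    by_contra h
    have hξ0 := (hsupp h).1
    apply h
    simp only [Pi.zero_apply, div_eq_zero_iff] at hξ
    rcases hξ with h' | h'
    · exact Complex.ext h' (him ξ)
    · linarith
  apply hne
  filter_upwards [hinv] with t ht
  rw [ht, Real.fourierInv_eq']
  apply integral_eq_zero_of_ae
  filter_upwards [h3] with ξ hξ
  rw [hξ]; simp
end

section
/- Let γ : ℝ → ℂ be continuous and integrable, with Fourier transform γ̂ supported in [0,1]. Then ∫_{−∞}^{0} e^{2πit} γ(t) dt = (1/(2πi)) ∫_{1}^{2} γ̂(ξ−1)/ξ dξ. -/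
open MeasureTheory Real Set Function
open scoped FourierTransform ENNReal NNReal

/-- if `γ : ℝ → ℂ` is continuous and integrable with `𝓕γ` supported in `[0,1]`,
then `∫_{-∞}^0 e^{2πit} γ(t) dt = (1/(2πi)) ∫_1^2 𝓕γ(ξ-1)/ξ dξ`. -/
theorem statement1 (γ : ℝ → ℂ) (hc : Continuous γ) (hInt : Integrable γ)
    (hsupp : Function.support (𝓕 γ) ⊆ Set.Icc 0 1) :
    (∫ t in Set.Iic (0:ℝ), e2pi t * γ t)
      = (1 / (2 * (Real.pi : ℂ) * Complex.I)) * ∫ ξ in (1:ℝ)..2, 𝓕 γ (ξ - 1) / (ξ : ℂ) := by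
  have hpi : (2 * (Real.pi : ℂ) * Complex.I) ≠ 0 := by
    simp [Real.pi_ne_zero]
  have hcF : Continuous (𝓕 γ) :=
    VectorFourier.fourierIntegral_continuous Real.continuous_fourierChar
      (L := innerₗ ℝ) (by exact continuous_inner) hInt
  have hIF : Integrable (𝓕 γ) :=
    (integrableOn_iff_integrable_of_support_subset hsupp).1
      (hcF.continuousOn.integrableOn_compact isCompact_Icc)
  have hinv := hc.fourierInv_fourier_eq hInt hIF
  let k : ℝ → ℂ := fun ξ => (1 / (2 * (Real.pi : ℂ) * Complex.I)) * (𝓕 γ (ξ - 1) / (ξ : ℂ))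
  have hz : ∀ ξ : ℝ, ξ ∉ Set.Icc (1:ℝ) 2 → 𝓕 γ (ξ - 1) = 0 := by
    intro ξ h
    by_contra h2
    have := hsupp (Function.mem_support.2 h2)
    exact h ⟨by linarith [this.1], by linarith [this.2]⟩
  have hks : Function.support k ⊆ Set.Icc 1 2 := by
    intro ξ h
    by_contra h2
    exact h (by simp [k, hz ξ h2])
  have hkc : ContinuousOn k (Set.Icc 1 2) := by
    refine continuousOn_const.mul (ContinuousOn.div ?_ ?_ ?_)
    · exact (hcF.comp (continuous_id.sub continuous_const)).continuousOn
    · exact Complex.continuous_ofReal.continuousOn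
    · intro x hx
      have : x ≠ 0 := by linarith [hx.1]
      exact_mod_cast this
  have hkI : Integrable k :=
    (integrableOn_iff_integrable_of_support_subset hks).1
      (hkc.integrableOn_compact isCompact_Icc)
  have hxkI : Integrable (fun x : ℝ => x • k x) := by
    refine (integrableOn_iff_integrable_of_support_subset (s := Set.Icc 1 2) ?_).1
      ((continuousOn_id.smul hkc).integrableOn_compact isCompact_Icc)
    intro ξ h
    exact hks (fun h0 => h (by simp [h0]))
  have hmul : (fun x : ℝ => (-2 * (Real.pi : ℂ) * Complex.I * x) • k x)
      = fun x => - 𝓕 γ (x - 1) := by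
    funext x
    by_cases hx : x ∈ Set.Icc (1:ℝ) 2
    · have h0 : (x : ℂ) ≠ 0 := by
        have : x ≠ 0 := by linarith [hx.1]
        exact_mod_cast this
      have h1 : (Real.pi : ℂ) ≠ 0 := by simp [Real.pi_ne_zero]
      simp only [k, smul_eq_mul]
      field_simp
    · simp [k, hz x hx]
  have hval : ∀ t : ℝ, 𝓕 (fun x => - 𝓕 γ (x - 1)) (-t) = - (e2pi t * γ t) := by
    intro t
    conv_rhs => rw [← hinv]
    rw [Real.fourierInv_eq', Real.fourier_eq', ← integral_const_mul, ← integral_neg,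
      ← integral_add_right_eq_self _ (1:ℝ)]
    congr 1
    funext x
    simp only [e2pi, smul_eq_mul, add_sub_cancel_right, mul_neg, ← mul_assoc, ← Complex.exp_add]
    congr 3
    simp
    ring
  have hder : ∀ t : ℝ, HasDerivAt (fun t => 𝓕 k (-t)) (e2pi t * γ t) t := by
    intro t
    have h := Real.hasDerivAt_fourier hkI hxkI (-t)
    rw [hmul, hval] at h
    have h2 := h.scomp t (hasDerivAt_neg t)
    have e : (-1 : ℝ) • (-(e2pi t * γ t)) = e2pi t * γ t := by simp
    rw [e] at h2
    exact h2
  have hlim : Filter.Tendsto (fun t => 𝓕 k (-t)) Filter.atBot (nhds 0) :=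
    ((Real.zero_at_infty_fourier k).mono_left atTop_le_cocompact).comp
      Filter.tendsto_neg_atBot_atTop
  have hI : Integrable (fun t => e2pi t * γ t) := by
    refine hInt.bdd_mul (c := 1) ?_ ?_
    · exact Continuous.aestronglyMeasurable (by unfold e2pi; fun_prop)
    · refine Filter.Eventually.of_forall fun t => ?_
      rw [e2pi, Complex.norm_exp]
      simp
  rw [integral_Iic_of_hasDerivAt_of_tendsto' (fun t _ => hder t) hI.integrableOn hlim]
  rw [← intervalIntegral.integral_const_mul, intervalIntegral.integral_of_le (by norm_num),
    ← integral_Icc_eq_integral_Ioc, Real.fourier_eq']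
  simp only [neg_zero, sub_zero, inner_zero_right, mul_zero, Complex.ofReal_zero, zero_mul,
    Complex.exp_zero, one_smul]
  exact (setIntegral_eq_integral_of_forall_compl_eq_zero
    (fun x hx => by simp [k, hz x hx])).symm
end

section
/- Let 0 < s < 1. There exists C > 0, depending only on φ and s, such that for every admissible finite collection 𝓘 = {[a_m,b_m]}_{m=1}^N and every function f : ℝ → ℂ with finite Hölder seminorm [f]_s = sup_{x≠y} |f(x)−f(y)|/|x−y|^s, the rotated family g_m(x) = e^{−2πi a_m x}(f∗φ_m)(x) satisfies ( Σ_{m=1}^N |g_m(x) − g_m(y)|² )^{1/2} ≤ C [f]_s |x−y|^s for all x, y ∈ ℝ. (Uniform boundedness of the rotated family on the homogeneous Hölder space Ċ^s = Ḟ^s_{∞∞}.) -/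
open MeasureTheory Real Set Function
open scoped FourierTransform ENNReal NNReal

/-- The function `φ_m` associated with the interval `[a,b]`: its Fourier transform is
`ξ ↦ 𝓕φ ((ξ - a)/(b - a))`; in space variables it is `x ↦ (b-a) e^{2πiax} φ((b-a)x)`. -/
noncomputable def phim (φ : ℝ → ℂ) (a b : ℝ) (x : ℝ) : ℂ :=
  ((b - a : ℝ) : ℂ) * e2pi (a * x) * φ ((b - a) * x)

/-- A finite collection of compact intervals `[a m, b m]` is admissible if the intervals are
nondegenerate, pairwise disjoint, and none of them contains `0` in its interior. -/
def Admissible {N : ℕ} (a b : Fin N → ℝ) : Prop :=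
  (∀ m, a m < b m) ∧ (∀ m, (0 : ℝ) ∉ Set.Ioo (a m) (b m)) ∧
    ∀ m m', m ≠ m' → Disjoint (Set.Icc (a m) (b m)) (Set.Icc (a m') (b m'))

/-- The rotated Rubio de Francia piece `g_m(x) = e^{-2πi a x} (f ∗ φ_m)(x)`. -/
noncomputable def rotConv (φ : ℝ → ℂ) (a b : ℝ) (f : ℝ → ℂ) (x : ℝ) : ℂ :=
  e2pi (-(a * x)) * conv f (phim φ a b) x

lemma e2pi_norm (t : ℝ) : ‖e2pi t‖ = 1 := by
  unfold e2pi
  rw [Complex.norm_exp]; simp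

lemma e2pi_add (s t : ℝ) : e2pi (s + t) = e2pi s * e2pi t := by
  unfold e2pi
  rw [← Complex.exp_add]; congr 1; push_cast; ring

lemma e2pi_temperate (a : ℝ) : (fun t : ℝ => e2pi (-(a * t))).HasTemperateGrowth := by
  have hd : ∀ n : ℕ, iteratedDeriv n (fun t : ℝ => e2pi (-(a * t)))
      = fun t => (-(2 * (Real.pi : ℂ) * Complex.I * a)) ^ n * e2pi (-(a * t)) := by
    intro n
    induction n with
    | zero => simp
    | succ n ih =>
      rw [iteratedDeriv_succ, ih]
      funext t
      have h1 : HasDerivAt (fun t : ℝ => (2 * (Real.pi : ℂ) * Complex.I * ((-(a * t) : ℝ) : ℂ)))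
          (-(2 * (Real.pi : ℂ) * Complex.I * a)) t := by
        have h0 : HasDerivAt (fun t : ℝ => ((t : ℝ) : ℂ)) 1 t := Complex.ofRealCLM.hasDerivAt
        have := h0.const_mul (-(2 * (Real.pi : ℂ) * Complex.I * a))
        convert! this using 1
        · funext t; push_cast; ring
        · ring
      have h2 := (h1.cexp).const_mul ((-(2 * (Real.pi : ℂ) * Complex.I * a)) ^ n)
      unfold e2pi
      rw [h2.deriv]; ring
  constructor
  · unfold e2pi
    have : ContDiff ℝ (⊤ : ℕ∞) (fun t : ℝ => ((t : ℝ) : ℂ)) := Complex.ofRealCLM.contDiff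
    have h2 : ContDiff ℝ (⊤ : ℕ∞) (fun t : ℝ => (2 * (Real.pi : ℂ) * Complex.I * ((-(a * t) : ℝ) : ℂ))) := by
      push_cast
      fun_prop
    exact h2.cexp
  · intro n
    refine ⟨0, ‖-(2 * (Real.pi : ℂ) * Complex.I * a)‖ ^ n, fun x => ?_⟩
    rw [norm_iteratedFDeriv_eq_norm_iteratedDeriv, hd]
    simp [e2pi_norm]

lemma bessel_abs {E : Type*} [NormedAddCommGroup E] [InnerProductSpace ℂ E] {ι : Type*}
    (S : Finset ι) (v : ι → E) (g : E) (B : ℝ) (hB : ∀ m ∈ S, ‖v m‖ ^ 2 ≤ B) (hB0 : 0 ≤ B)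
    (horth : ∀ m ∈ S, ∀ n ∈ S, m ≠ n → inner ℂ (v m) (v n) = 0) :
    ∑ m ∈ S, ‖inner ℂ g (v m)‖ ^ 2 ≤ B * ‖g‖ ^ 2 := by
  set T := ∑ m ∈ S, ‖inner ℂ g (v m)‖ ^ 2 with hT
  set w := ∑ m ∈ S, (starRingEnd ℂ (inner ℂ g (v m))) • v m with hw
  have hT0 : 0 ≤ T := Finset.sum_nonneg fun _ _ => by positivity
  have h1 : inner ℂ g w = (T : ℂ) := by
    rw [hw, inner_sum, hT]
    push_cast
    refine Finset.sum_congr rfl fun m _ => ?_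
    rw [inner_smul_right, Complex.conj_mul']
  have h2 : inner ℂ w w = ((∑ m ∈ S, ‖inner ℂ g (v m)‖ ^ 2 * ‖v m‖ ^ 2 : ℝ) : ℂ) := by
    conv_lhs => rw [hw]
    rw [sum_inner]
    push_cast
    refine Finset.sum_congr rfl fun m hm => ?_
    rw [inner_sum, Finset.sum_eq_single m]
    · rw [inner_smul_left, inner_smul_right, inner_self_eq_norm_sq_to_K]
      rw [← mul_assoc, Complex.conj_conj, Complex.mul_conj']; rfl
    · intro n hn hne
      rw [inner_smul_left, inner_smul_right, horth m hm n hn hne.symm]; simp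
    · intro h; exact absurd hm h
  have h3 : ‖w‖ ^ 2 ≤ B * T := by
    have : ‖w‖ ^ 2 = ∑ m ∈ S, ‖inner ℂ g (v m)‖ ^ 2 * ‖v m‖ ^ 2 := by
      rw [inner_self_eq_norm_sq_to_K] at h2
      refine Complex.ofReal_injective ?_
      rw [← h2]; push_cast; rfl
    rw [this, hT, Finset.mul_sum]
    refine Finset.sum_le_sum fun m hm => ?_
    rw [mul_comm]
    exact mul_le_mul_of_nonneg_right (hB m hm) (by positivity)
  have h4 : T ≤ ‖g‖ * ‖w‖ := by
    have := norm_inner_le_norm (𝕜 := ℂ) g w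
    rw [h1] at this
    simpa [abs_of_nonneg hT0] using this
  have h5 : T ^ 2 ≤ (B * ‖g‖ ^ 2) * T := by
    calc T ^ 2 ≤ (‖g‖ * ‖w‖) ^ 2 := by gcongr
      _ = ‖g‖ ^ 2 * ‖w‖ ^ 2 := by ring
      _ ≤ ‖g‖ ^ 2 * (B * T) := by gcongr
      _ = _ := by ring
  rcases hT0.eq_or_lt with h | h
  · rw [← h]; positivity
  · nlinarith

lemma bessel_fun {ι : Type*} (S : Finset ι) (Ψ : ι → SchwartzMap ℝ ℂ) (G : ℝ → ℂ)
    (hG : MemLp G 2) (B : ℝ) (hB0 : 0 ≤ B) (hB : ∀ m ∈ S, ∫ t, ‖Ψ m t‖ ^ 2 ≤ B)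
    (horth : ∀ m ∈ S, ∀ n ∈ S, m ≠ n → ∫ t, inner ℂ (Ψ m t) (Ψ n t) = 0) :
    ∑ m ∈ S, ‖∫ t, G t * Ψ m t‖ ^ 2 ≤ B * ∫ t, ‖G t‖ ^ 2 := by
  have hG' : MemLp (fun t => starRingEnd ℂ (G t)) 2 := hG.star
  have hn : ∀ {u : ℝ → ℂ} (hu : MemLp u 2), ‖hu.toLp u‖ ^ 2 = ∫ t, ‖u t‖ ^ 2 := by
    intro u hu
    have h1 : inner ℂ (hu.toLp u) (hu.toLp u) = ((∫ t, ‖u t‖ ^ 2 : ℝ) : ℂ) := by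
      rw [L2.inner_def, ← integral_complex_ofReal]
      refine integral_congr_ae ?_
      filter_upwards [hu.coeFn_toLp] with t ht
      rw [ht, inner_self_eq_norm_sq_to_K]; simp
    rw [inner_self_eq_norm_sq_to_K] at h1
    refine Complex.ofReal_injective ?_
    rw [← h1]; push_cast; rfl
  have key := bessel_abs S (fun m => ((Ψ m).memLp 2).toLp (Ψ m)) (hG'.toLp _) B
    (fun m hm => by rw [hn]; exact hB m hm) hB0 (fun m hm n hmn hne => by
      rw [L2.inner_def, ← horth m hm n hmn hne]
      refine integral_congr_ae ?_
      filter_upwards [((Ψ m).memLp 2).coeFn_toLp, ((Ψ n).memLp 2).coeFn_toLp] with t h1 h2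
      rw [h1, h2])
  rw [hn] at key
  simp only [RCLike.norm_conj] at key
  refine le_trans (le_of_eq ?_) key
  refine Finset.sum_congr rfl fun m _ => ?_
  congr 2
  rw [L2.inner_def]
  refine integral_congr_ae ?_
  filter_upwards [((Ψ m).memLp 2).coeFn_toLp, hG'.coeFn_toLp] with t h1 h2
  rw [h1, h2]
  simp [mul_comm]

/-- multiplication by `1 + c u²` -/
noncomputable def polyMul (c : ℝ) (η : SchwartzMap ℝ ℂ) : SchwartzMap ℝ ℂ :=
  SchwartzMap.smulLeftCLM ℂ (fun u : ℝ => 1 + c * u ^ 2) η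

lemma polyMul_apply (c : ℝ) (η : SchwartzMap ℝ ℂ) (u : ℝ) :
    polyMul c η u = ((1 + c * u ^ 2 : ℝ) : ℂ) * η u := by
  unfold polyMul
  rw [SchwartzMap.smulLeftCLM_apply_apply (by fun_prop)]
  simp

lemma fourier_mul_vanish (η : SchwartzMap ℝ ℂ) (h : ∀ ξ, ξ ∉ Icc (0:ℝ) 1 → 𝓕 (⇑η) ξ = 0) :
    ∀ ξ, ξ ∉ Icc (0:ℝ) 1 → 𝓕 (fun u : ℝ => (u : ℂ) * η u) ξ = 0 := by
  intro ξ hξ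
  have hi : Integrable (fun x : ℝ => x • η x) := by
    have h1 := SchwartzMap.integrable (μ := volume) (SchwartzMap.smulLeftCLM ℂ (fun u : ℝ => u) η)
    rwa [SchwartzMap.smulLeftCLM_apply (by fun_prop)] at h1
  have hd := Real.deriv_fourier (η.integrable (μ := volume)) hi
  have h0 : deriv (𝓕 (⇑η)) ξ = 0 := by
    have : 𝓕 (⇑η) =ᶠ[nhds ξ] fun _ => 0 := by
      filter_upwards [isClosed_Icc.isOpen_compl.mem_nhds hξ] with z hz using h z hz
    rw [this.deriv_eq]; simp
  rw [hd] at h0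
  have e : (fun x : ℝ => (-2 * (π : ℂ) * Complex.I * x) • η x)
      = ⇑((-2 * (π : ℂ) * Complex.I) • (SchwartzMap.smulLeftCLM ℂ (fun u : ℝ => u) η)) := by
    funext x
    rw [smul_apply, SchwartzMap.smulLeftCLM_apply_apply (by fun_prop)]
    simp [mul_assoc]
  have e' : (fun u : ℝ => (u : ℂ) * η u) = ⇑(SchwartzMap.smulLeftCLM ℂ (fun u : ℝ => u) η) := by
    rw [SchwartzMap.smulLeftCLM_apply (by fun_prop)]; simp
  rw [e, ← SchwartzMap.fourier_coe, FourierTransform.fourier_smul, smul_apply,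
    SchwartzMap.fourier_coe, ← e'] at h0
  have : (-2 * (π : ℂ) * Complex.I) ≠ 0 := by simp [Real.pi_ne_zero]
  simpa [this] using h0

lemma polyMul_vanish (c : ℝ) (η : SchwartzMap ℝ ℂ) (h : ∀ ξ, ξ ∉ Icc (0:ℝ) 1 → 𝓕 (⇑η) ξ = 0) :
    ∀ ξ, ξ ∉ Icc (0:ℝ) 1 → 𝓕 (⇑(polyMul c η)) ξ = 0 := by
  intro ξ hξ
  set η1 := SchwartzMap.smulLeftCLM ℂ (fun u : ℝ => u) η with hη1
  set η2 := SchwartzMap.smulLeftCLM ℂ (fun u : ℝ => u) η1 with hη2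
  have e1 : ⇑η1 = fun u : ℝ => (u : ℂ) * η u := by
    rw [hη1, SchwartzMap.smulLeftCLM_apply (by fun_prop)]; simp
  have e2 : ⇑η2 = fun u : ℝ => (u : ℂ) * η1 u := by
    rw [hη2, SchwartzMap.smulLeftCLM_apply (by fun_prop)]; simp
  have v1 := fourier_mul_vanish η h
  rw [← e1] at v1
  have v2 := fourier_mul_vanish η1 v1
  rw [← e2] at v2
  have e3 : polyMul c η = η + (c : ℂ) • η2 := by
    ext u
    rw [polyMul_apply]
    simp [e2, e1]; ring
  rw [e3, ← SchwartzMap.fourier_coe, FourierTransform.fourier_add, FourierTransform.fourier_smul]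
  simp [SchwartzMap.fourier_coe, h ξ hξ, v2 ξ hξ]

/-- modulated dilated translate `t ↦ e^{-2πi a t} L θ(L(x-t))` as a Schwartz function -/
lemma exists_mod (θ : SchwartzMap ℝ ℂ) (a L x : ℝ) (hL : 0 < L) :
    ∃ Ψ : SchwartzMap ℝ ℂ, ∀ t, Ψ t = e2pi (-(a * t)) * ((L : ℂ) * θ (L * (x - t))) := by
  have ht : (fun t : ℝ => L * (x - t)).HasTemperateGrowth := by fun_prop
  have hanti : AntilipschitzWith (Real.toNNReal L⁻¹) (fun t : ℝ => L * (x - t)) := by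
    refine AntilipschitzWith.of_le_mul_dist fun s t => ?_
    rw [Real.coe_toNNReal _ (by positivity), Real.dist_eq, Real.dist_eq]
    have : L * (x - s) - L * (x - t) = L * (t - s) := by ring
    rw [this, abs_mul, abs_of_pos hL, abs_sub_comm, ← mul_assoc, inv_mul_cancel₀ hL.ne', one_mul]
  refine ⟨SchwartzMap.smulLeftCLM ℂ (fun t : ℝ => e2pi (-(a * t)))
    ((L : ℂ) • SchwartzMap.compCLMOfAntilipschitz ℂ ht hanti θ), fun t => ?_⟩
  rw [SchwartzMap.smulLeftCLM_apply_apply (e2pi_temperate a)]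
  simp

lemma fourier_mod (θ : ℝ → ℂ) (a L x : ℝ) (hL : 0 < L) (ξ : ℝ) :
    𝓕 (fun t : ℝ => e2pi (-(a * t)) * ((L : ℂ) * θ (L * (x - t)))) ξ
      = e2pi (-((a + ξ) * x)) * 𝓕 θ (-(a + ξ) / L) := by
  rw [Real.fourier_eq', Real.fourier_eq']
  simp only [smul_eq_mul]
  have h1 := integral_sub_left_eq_self (μ := (volume : Measure ℝ)) (fun t : ℝ => 
    Complex.exp (↑(-2 * π * inner ℝ t ξ) * Complex.I) * (e2pi (-(a * t)) * (↑L * θ (L * (x - t))))) x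
  rw [← h1]
  have h2 := Measure.integral_comp_mul_left (fun v : ℝ => 
    e2pi (-((a + ξ) * x)) * (Complex.exp (↑(-2 * π * inner ℝ v (-(a + ξ) / L)) * Complex.I) * θ v)) L
  rw [← integral_const_mul]
  rw [abs_of_pos (by positivity : 0 < L⁻¹)] at h2
  have h3 : ∀ z w : ℂ, z = L⁻¹ • w → w = L * z := by
    intro z w h
    rw [h]
    have : (L : ℂ) ≠ 0 := by exact_mod_cast hL.ne'
    simp [this]
  rw [h3 _ _ h2, ← integral_const_mul]
  congr 1
  funext t
  have e : x - (x - t) = t := by ring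
  rw [e]
  unfold e2pi
  have hLc : (L : ℂ) ≠ 0 := by exact_mod_cast hL.ne'
  have : Complex.exp (↑(-2 * π * inner ℝ (x - t) ξ) * Complex.I) * Complex.exp (2 * (π : ℂ) * Complex.I * ((-(a * (x - t)) : ℝ) : ℂ)) = Complex.exp (2 * (π : ℂ) * Complex.I * ((-((a + ξ) * x) : ℝ) : ℂ)) * Complex.exp (↑(-2 * π * inner ℝ (L * t) (-(a + ξ) / L)) * Complex.I) := by
    rw [← Complex.exp_add, ← Complex.exp_add]
    congr 1
    simp
    field_simp
    ring
  linear_combination (L : ℂ) * θ (L * t) * this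

lemma orth_mod (θ₁ θ₂ Ψ₁ Ψ₂ : SchwartzMap ℝ ℂ) (a₁ a₂ L₁ L₂ x : ℝ) (hL₁ : 0 < L₁) (hL₂ : 0 < L₂)
    (h₁ : ∀ ξ, ξ ∉ Icc (0:ℝ) 1 → 𝓕 (⇑θ₁) ξ = 0) (h₂ : ∀ ξ, ξ ∉ Icc (0:ℝ) 1 → 𝓕 (⇑θ₂) ξ = 0)
    (hΨ₁ : ∀ t, Ψ₁ t = e2pi (-(a₁ * t)) * ((L₁ : ℂ) * θ₁ (L₁ * (x - t))))
    (hΨ₂ : ∀ t, Ψ₂ t = e2pi (-(a₂ * t)) * ((L₂ : ℂ) * θ₂ (L₂ * (x - t))))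
    (hd : Disjoint (Icc a₁ (a₁ + L₁)) (Icc a₂ (a₂ + L₂))) :
    ∫ t, inner ℂ (Ψ₁ t) (Ψ₂ t) = 0 := by
  rw [← SchwartzMap.integral_inner_fourier_fourier]
  have : ∀ ξ, inner ℂ (𝓕 Ψ₁ ξ) (𝓕 Ψ₂ ξ) = 0 := by
    intro ξ
    rw [SchwartzMap.fourier_coe, SchwartzMap.fourier_coe, funext hΨ₁, funext hΨ₂,
      fourier_mod _ _ _ _ hL₁, fourier_mod _ _ _ _ hL₂]
    have aux : ∀ a L : ℝ, 0 < L → -(a + ξ) / L ∈ Icc (0:ℝ) 1 → -ξ ∈ Icc a (a + L) := by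
      intro a L hL ⟨h1, h2⟩
      rw [le_div_iff₀ hL] at h1
      rw [div_le_iff₀ hL] at h2
      constructor <;> linarith
    by_cases c1 : -(a₁ + ξ) / L₁ ∈ Icc (0:ℝ) 1
    · by_cases c2 : -(a₂ + ξ) / L₂ ∈ Icc (0:ℝ) 1
      · exact absurd (aux _ _ hL₂ c2) (Set.disjoint_left.1 hd (aux _ _ hL₁ c1))
      · rw [h₂ _ c2]; simp
    · rw [h₁ _ c1]; simp
  rw [integral_congr_ae (Filter.Eventually.of_forall this)]; simp

lemma cauchy_int (l x : ℝ) (hl : 0 < l) :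
    Integrable (fun t : ℝ => (1 + (l * (x - t)) ^ 2)⁻¹) ∧
      ∫ t : ℝ, (1 + (l * (x - t)) ^ 2)⁻¹ = π / l := by
  have h1 : Integrable (fun t : ℝ => (1 + (l * t) ^ 2)⁻¹) :=
    integrable_inv_one_add_sq.comp_mul_left' hl.ne'
  constructor
  · exact h1.comp_sub_left x
  · rw [integral_sub_left_eq_self (fun t : ℝ => (1 + (l * t) ^ 2)⁻¹) volume x,
      Measure.integral_comp_mul_left (fun t : ℝ => (1 + t ^ 2)⁻¹) l,
      integral_univ_inv_one_add_sq, abs_of_pos (by positivity), smul_eq_mul]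
    field_simp

lemma holder_cont {s K : ℝ} (hs0 : 0 < s) {f : ℝ → ℂ}
    (hf : ∀ x y : ℝ, ‖f x - f y‖ ≤ K * |x - y| ^ s) : Continuous f := by
  rw [continuous_iff_continuousAt]
  intro x
  rw [ContinuousAt, tendsto_iff_norm_sub_tendsto_zero]
  refine squeeze_zero (fun _ => norm_nonneg _) (fun y => hf y x) ?_
  have : Continuous fun y : ℝ => K * |y - x| ^ s := by
    have h : Continuous fun y : ℝ => |y - x| := by fun_prop
    exact continuous_const.mul (h.rpow_const fun _ => Or.inr hs0.le)
  have h2 := this.tendsto x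
  simpa [Real.zero_rpow hs0.ne'] using h2

lemma holder_G {s K : ℝ} (hs0 : 0 < s) (hs1 : s < 1) (hK : 0 ≤ K) {f : ℝ → ℂ}
    (hf : ∀ x y : ℝ, ‖f x - f y‖ ≤ K * |x - y| ^ s) (l x : ℝ) (hl : 0 < l) :
    MemLp (fun t : ℝ => (f t - f x) * (((1 + (l * (x - t)) ^ 2 : ℝ) : ℂ))⁻¹) 2 ∧
    ∫ t : ℝ, ‖(f t - f x) * (((1 + (l * (x - t)) ^ 2 : ℝ) : ℂ))⁻¹‖ ^ 2
      ≤ K ^ 2 * l ^ (-2 * s) * (π / l) := by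
  have hc := holder_cont hs0 hf
  have hp : ∀ t : ℝ, (0 : ℝ) < 1 + (l * (x - t)) ^ 2 := fun t => by positivity
  have hcont : Continuous (fun t : ℝ => (f t - f x) * (((1 + (l * (x - t)) ^ 2 : ℝ) : ℂ))⁻¹) := by
    refine (hc.sub continuous_const).mul (Continuous.inv₀ ?_ ?_)
    · exact Complex.continuous_ofReal.comp (by fun_prop)
    · intro t; exact_mod_cast (hp t).ne'
  have hb : ∀ t : ℝ, ‖(f t - f x) * (((1 + (l * (x - t)) ^ 2 : ℝ) : ℂ))⁻¹‖ ^ 2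
      ≤ K ^ 2 * l ^ (-2 * s) * (1 + (l * (x - t)) ^ 2)⁻¹ := by
    intro t
    have h1 := hf t x
    set P := 1 + (l * (x - t)) ^ 2 with hP
    have hPp : 0 < P := hp t
    have hP1 : 1 ≤ P := by rw [hP]; nlinarith [sq_nonneg (l * (x - t))]
    rw [norm_mul, norm_inv, Complex.norm_real, Real.norm_eq_abs, abs_of_pos hPp, mul_pow, inv_pow]
    have h2 : (|t - x| ^ s) ^ 2 ≤ l ^ (-2 * s) * P := by
      have e : |t - x| = l⁻¹ * |l * (x - t)| := by
        rw [abs_mul, abs_of_pos hl, abs_sub_comm, ← mul_assoc, inv_mul_cancel₀ hl.ne', one_mul]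
      rw [e, Real.mul_rpow (by positivity) (abs_nonneg _), mul_pow]
      have e1 : ((l⁻¹) ^ s) ^ 2 = l ^ (-2 * s) := by
        rw [Real.inv_rpow hl.le, ← Real.rpow_neg hl.le, ← Real.rpow_natCast, ← Real.rpow_mul hl.le]
        congr 1; push_cast; ring
      rw [e1]
      gcongr
      have e2 : (|l * (x - t)| ^ s) ^ 2 = ((l * (x - t)) ^ 2) ^ s := by
        rw [← sq_abs (l * (x - t)), ← Real.rpow_natCast, ← Real.rpow_natCast,
          ← Real.rpow_mul (abs_nonneg _), ← Real.rpow_mul (abs_nonneg _), mul_comm s]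
      rw [e2]
      calc ((l * (x - t)) ^ 2) ^ s ≤ P ^ s := by
            apply Real.rpow_le_rpow (by positivity) _ hs0.le
            rw [hP]; linarith
        _ ≤ P ^ (1 : ℝ) := Real.rpow_le_rpow_of_exponent_le hP1 hs1.le
        _ = P := Real.rpow_one P
    calc ‖f t - f x‖ ^ 2 * (P ^ 2)⁻¹ ≤ (K * |t - x| ^ s) ^ 2 * (P ^ 2)⁻¹ := by gcongr
      _ = K ^ 2 * (|t - x| ^ s) ^ 2 * (P ^ 2)⁻¹ := by ring
      _ ≤ K ^ 2 * (l ^ (-2 * s) * P) * (P ^ 2)⁻¹ := by gcongr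
      _ = K ^ 2 * l ^ (-2 * s) * P⁻¹ := by field_simp
  obtain ⟨ci, cv⟩ := cauchy_int l x hl
  have hbi := ci.const_mul (K ^ 2 * l ^ (-2 * s))
  have hint : Integrable (fun t : ℝ => ‖(f t - f x) * (((1 + (l * (x - t)) ^ 2 : ℝ) : ℂ))⁻¹‖ ^ 2) := by
    refine hbi.mono' (by fun_prop) (Filter.Eventually.of_forall fun t => ?_)
    rw [Real.norm_eq_abs, abs_of_nonneg (by positivity)]
    exact hb t
  refine ⟨(memLp_two_iff_integrable_sq_norm hcont.aestronglyMeasurable).2 hint, ?_⟩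
  refine (integral_mono hint hbi hb).trans (le_of_eq ?_)
  rw [integral_const_mul, cv]

lemma kern {s K : ℝ} (hs0 : 0 < s) (hs1 : s < 1) (hK : 0 ≤ K) {f : ℝ → ℂ}
    (hf : ∀ x y : ℝ, ‖f x - f y‖ ≤ K * |x - y| ^ s) (l x : ℝ) (hl : 0 < l)
    (η Ψ : SchwartzMap ℝ ℂ) (a L : ℝ) (hL : 0 < L)
    (h0 : 𝓕 (⇑η) (-a / L) = 0)
    (hΨ : ∀ t, Ψ t = e2pi (-(a * t)) * ((L : ℂ) * polyMul ((l / L) ^ 2) η (L * (x - t)))) :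
    Integrable (fun t => f t * (e2pi (-(a * t)) * ((L : ℂ) * η (L * (x - t))))) ∧
    ∫ t, f t * (e2pi (-(a * t)) * ((L : ℂ) * η (L * (x - t)))) =
      ∫ t, ((f t - f x) * (((1 + (l * (x - t)) ^ 2 : ℝ) : ℂ))⁻¹) * Ψ t := by
  obtain ⟨ψ, hψ⟩ := exists_mod η a L x hL
  have hG := (holder_G hs0 hs1 hK hf l x hl).1
  have hi := hG.integrable_mul (Ψ.memLp 2)
  have e : ∀ t, ((f t - f x) * (((1 + (l * (x - t)) ^ 2 : ℝ) : ℂ))⁻¹) * Ψ t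
      = f t * ψ t - f x * ψ t := by
    intro t
    have hp : (((1 + (l * (x - t)) ^ 2 : ℝ) : ℂ)) ≠ 0 := by
      have : (0:ℝ) < 1 + (l * (x - t)) ^ 2 := by positivity
      exact_mod_cast this.ne'
    rw [hΨ, hψ, polyMul_apply]
    have e2 : (l / L) ^ 2 * (L * (x - t)) ^ 2 = (l * (x - t)) ^ 2 := by field_simp
    rw [e2]
    generalize (((1 + (l * (x - t)) ^ 2 : ℝ) : ℂ)) = P at hp
    generalize η (L * (x - t)) = z
    generalize e2pi (-(a * t)) = w
    field_simp
  have hψi : Integrable (fun t => f x * ψ t) := (ψ.integrable).const_mul _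
  have hi2 : Integrable (fun t => f t * ψ t) := by
    have := hi.add hψi
    refine this.congr (Filter.Eventually.of_forall fun t => ?_)
    simp only [Pi.add_apply, Pi.mul_apply]
    rw [e]; ring
  have hz : ∫ t, ψ t = 0 := by
    have h1 := fourier_mod (⇑η) a L x hL 0
    rw [← funext hψ, add_zero, h0, mul_zero, Real.fourier_eq'] at h1
    simpa using h1
  constructor
  · simpa only [hψ] using hi2
  · rw [integral_congr_ae (Filter.Eventually.of_forall e), integral_sub hi2 hψi,
      integral_const_mul, hz]
    simp [hψ]

lemma group_est {s K : ℝ} (hs0 : 0 < s) (hs1 : s < 1) (hK : 0 ≤ K) {f : ℝ → ℂ}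
    (hf : ∀ x y : ℝ, ‖f x - f y‖ ≤ K * |x - y| ^ s) (l x : ℝ) (hl : 0 < l)
    {ι : Type*} (S : Finset ι) (a L : ι → ℝ) (η : ι → SchwartzMap ℝ ℂ)
    (hL : ∀ m ∈ S, l ≤ L m ∧ L m ≤ 2 * l)
    (hη : ∀ m ∈ S, Function.support (𝓕 ⇑(η m)) ⊆ Ioo 0 1)
    (h0 : ∀ m ∈ S, -a m / L m ∉ Ioo (0:ℝ) 1)
    (hd : ∀ m ∈ S, ∀ n ∈ S, m ≠ n → Disjoint (Icc (a m) (a m + L m)) (Icc (a n) (a n + L n)))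
    (B : ℝ) (hB : ∀ m ∈ S, ∀ u, (1 + u ^ 2) ^ 2 * ‖η m u‖ ≤ B) :
    ∑ m ∈ S, ‖∫ t, f t * (e2pi (-(a m * t)) * ((L m : ℂ) * η m (L m * (x - t))))‖ ^ 2
      ≤ 2 * π ^ 2 * B ^ 2 * K ^ 2 * l ^ (-2 * s) := by
  have hex : ∀ m, ∃ Ψ : SchwartzMap ℝ ℂ, m ∈ S → ∀ t, Ψ t = e2pi (-(a m * t)) *
      ((L m : ℂ) * polyMul ((l / L m) ^ 2) (η m) (L m * (x - t))) := by
    intro m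
    by_cases hm : m ∈ S
    · obtain ⟨Ψ, h⟩ := exists_mod (polyMul ((l / L m) ^ 2) (η m)) (a m) (L m) x
        (hl.trans_le (hL m hm).1)
      exact ⟨Ψ, fun _ => h⟩
    · exact ⟨0, fun h => absurd h hm⟩
  choose Ψ hΨ using hex
  have hLp : ∀ m ∈ S, 0 < L m := fun m hm => hl.trans_le (hL m hm).1
  have hv : ∀ m ∈ S, ∀ ξ, ξ ∉ Ioo (0:ℝ) 1 → 𝓕 (⇑(η m)) ξ = 0 := by
    intro m hm ξ hξ
    by_contra h
    exact hξ (hη m hm h)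
  have hv2 : ∀ m ∈ S, ∀ ξ, ξ ∉ Icc (0:ℝ) 1 → 𝓕 (⇑(polyMul ((l / L m) ^ 2) (η m))) ξ = 0 :=
    fun m hm => polyMul_vanish _ _ fun ξ hξ => hv m hm ξ fun h => hξ (Ioo_subset_Icc_self h)
  obtain ⟨hG, hGn⟩ := holder_G hs0 hs1 hK hf l x hl
  have hnorm : ∀ m ∈ S, ∫ t, ‖Ψ m t‖ ^ 2 ≤ 2 * π * l * B ^ 2 := by
    intro m hm
    have hLm := hLp m hm
    obtain ⟨ci, cv⟩ := cauchy_int (L m) x hLm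
    have hb : ∀ t, ‖Ψ m t‖ ^ 2 ≤ (L m) ^ 2 * B ^ 2 * (1 + (L m * (x - t)) ^ 2)⁻¹ := by
      intro t
      rw [hΨ m hm, polyMul_apply, norm_mul, e2pi_norm, one_mul, norm_mul, norm_mul,
        Complex.norm_real, Complex.norm_real, Real.norm_eq_abs, Real.norm_eq_abs, abs_of_pos hLm]
      set u := L m * (x - t)
      have h1 := hB m hm u
      have hc : (l / L m) ^ 2 ≤ 1 := by
        have h3 : l / L m ≤ 1 := (div_le_one hLm).2 (hL m hm).1
        have h4 : 0 ≤ l / L m := by positivity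
        nlinarith
      have hc1 : |1 + (l / L m) ^ 2 * u ^ 2| ≤ 1 + u ^ 2 := by
        rw [abs_of_nonneg (by positivity)]
        nlinarith [sq_nonneg u]
      have hP : 1 ≤ 1 + u ^ 2 := by nlinarith [sq_nonneg u]
      have h2 : |1 + (l / L m) ^ 2 * u ^ 2| * ‖η m u‖ ≤ B * (1 + u ^ 2)⁻¹ := by
        rw [← div_eq_mul_inv, le_div_iff₀ (by positivity)]
        calc _ ≤ (1 + u ^ 2) * ‖η m u‖ * (1 + u ^ 2) := by gcongr
          _ = (1 + u ^ 2) ^ 2 * ‖η m u‖ := by ring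
          _ ≤ B := h1
      calc (L m * (|1 + (l / L m) ^ 2 * u ^ 2| * ‖η m u‖)) ^ 2
          ≤ (L m * (B * (1 + u ^ 2)⁻¹)) ^ 2 := by gcongr
        _ = (L m) ^ 2 * B ^ 2 * ((1 + u ^ 2)⁻¹ * (1 + u ^ 2)⁻¹) := by ring
        _ ≤ (L m) ^ 2 * B ^ 2 * ((1 + u ^ 2)⁻¹ * 1) := by
          gcongr
          exact inv_le_one_of_one_le₀ hP
        _ = _ := by rw [mul_one]
    have hint : Integrable (fun t => ‖Ψ m t‖ ^ 2) :=
      (memLp_two_iff_integrable_sq_norm (Ψ m).continuous.aestronglyMeasurable).1 ((Ψ m).memLp 2)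
    refine (integral_mono hint (ci.const_mul _) hb).trans ?_
    rw [integral_const_mul, cv]
    have : (L m) ^ 2 * B ^ 2 * (π / L m) = π * B ^ 2 * L m := by field_simp
    rw [this]
    calc π * B ^ 2 * L m ≤ π * B ^ 2 * (2 * l) := by
          have := (hL m hm).2
          gcongr
      _ = _ := by ring
  have key := bessel_fun S Ψ _ hG (2 * π * l * B ^ 2) (by positivity) hnorm
    (fun m hm n hn hne => orth_mod _ _ (Ψ m) (Ψ n) (a m) (a n) (L m) (L n) x (hLp m hm) (hLp n hn)
      (hv2 m hm) (hv2 n hn) (hΨ m hm) (hΨ n hn) (hd m hm n hn hne))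
  calc _ = ∑ m ∈ S, ‖∫ t, ((f t - f x) * (((1 + (l * (x - t)) ^ 2 : ℝ) : ℂ))⁻¹) * Ψ m t‖ ^ 2 := by
        refine Finset.sum_congr rfl fun m hm => ?_
        rw [(kern hs0 hs1 hK hf l x hl (η m) (Ψ m) (a m) (L m) (hLp m hm)
          (hv m hm _ (h0 m hm)) (hΨ m hm)).2]
    _ ≤ _ := key
    _ ≤ 2 * π * l * B ^ 2 * (K ^ 2 * l ^ (-2 * s) * (π / l)) := by gcongr
    _ = _ := by field_simp

lemma geo_sum {ι : Type*} (S : Finset ι) (T : ι → ℝ) (κ : ι → ℕ) (A r : ℝ) (hA : 0 ≤ A)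
    (hr0 : 0 ≤ r) (hr1 : r < 1) (h : ∀ n, ∑ m ∈ S with κ m = n, T m ≤ A * r ^ n) :
    ∑ m ∈ S, T m ≤ A * (1 - r)⁻¹ := by
  rw [← Finset.sum_fiberwise_of_maps_to (s := S) (t := S.image κ) (g := κ)
    (fun m hm => Finset.mem_image_of_mem κ hm) T]
  calc _ ≤ ∑ n ∈ S.image κ, A * r ^ n := Finset.sum_le_sum fun n _ => h n
    _ = A * ∑ n ∈ S.image κ, r ^ n := by rw [Finset.mul_sum]
    _ ≤ A * (1 - r)⁻¹ := by
      gcongr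
      rw [← tsum_geometric_of_lt_one hr0 hr1]
      exact (summable_geometric_of_lt_one hr0 hr1).sum_le_tsum _ (fun _ _ => by positivity)

lemma schwartz_bound (φ : SchwartzMap ℝ ℂ) (n : ℕ) :
    ∃ D : ℝ, 0 < D ∧ ∀ u, (1 + u ^ 2) ^ 2 * ‖iteratedDeriv n (⇑φ) u‖ ≤ D := by
  obtain ⟨C0, h0, H0⟩ := φ.decay 0 n
  obtain ⟨C4, h4, H4⟩ := φ.decay 4 n
  refine ⟨2 * C0 + 2 * C4, by positivity, fun u => ?_⟩
  have a0 := H0 u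
  have a4 := H4 u
  rw [norm_iteratedFDeriv_eq_norm_iteratedDeriv] at a0 a4
  have e : ‖u‖ ^ 4 = u ^ 4 := by
    rw [Real.norm_eq_abs, Even.pow_abs (by decide)]
  rw [e] at a4
  rw [pow_zero, one_mul] at a0
  have : (1 + u ^ 2) ^ 2 ≤ 2 + 2 * u ^ 4 := by nlinarith [sq_nonneg (1 - u ^ 2)]
  have := mul_le_mul_of_nonneg_right this (norm_nonneg (iteratedDeriv n (⇑φ) u))
  nlinarith

/-- `u ↦ φ u - φ (u + δ)` -/
noncomputable def diffS (φ : SchwartzMap ℝ ℂ) (δ : ℝ) : SchwartzMap ℝ ℂ :=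
  φ - SchwartzMap.compSubConstCLM ℂ (-δ) φ

lemma diffS_apply (φ : SchwartzMap ℝ ℂ) (δ u : ℝ) : diffS φ δ u = φ u - φ (u + δ) := by
  simp [diffS]

lemma diffS_supp (φ : SchwartzMap ℝ ℂ) (δ : ℝ) (hφ : Function.support (𝓕 ⇑φ) ⊆ Set.Ioo 0 1) :
    Function.support (𝓕 ⇑(diffS φ δ)) ⊆ Set.Ioo 0 1 := by
  intro ξ hξ
  by_contra hn
  have h0 : 𝓕 (⇑φ) ξ = 0 := by
    by_contra h
    exact hn (hφ h)
  apply hξ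
  have h1 : 𝓕 (fun u => φ (u + δ)) ξ = 0 := by
    rw [Real.fourier_eq'] at h0 ⊢
    have := integral_add_right_eq_self (μ := (volume : Measure ℝ)) (fun v : ℝ =>
      Complex.exp (↑(-2 * π * inner ℝ (v - δ) ξ) * Complex.I) • φ v) δ
    simp only [add_sub_cancel_right] at this
    rw [this]
    have e : ∀ v : ℝ, Complex.exp (↑(-2 * π * inner ℝ (v - δ) ξ) * Complex.I) • φ v
       = Complex.exp (↑(2 * π * (δ * ξ)) * Complex.I) * (Complex.exp (↑(-2 * π * inner ℝ v ξ) * Complex.I) • φ v) := by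
      intro v
      rw [smul_eq_mul, smul_eq_mul, ← mul_assoc, ← Complex.exp_add]
      congr 2
      simp
      ring
    simp_rw [e]
    rw [integral_const_mul, h0, mul_zero]
  have e2 : ⇑(SchwartzMap.compSubConstCLM ℂ (-δ) φ) = fun u => φ (u + δ) := by
    funext u; simp
  rw [← e2] at h1
  rw [diffS, ← SchwartzMap.fourier_coe, sub_eq_add_neg, ← neg_one_smul ℂ,
    FourierTransform.fourier_add, FourierTransform.fourier_smul]
  simp [SchwartzMap.fourier_coe, h0, h1]

lemma diffS_bound (φ : SchwartzMap ℝ ℂ) (D : ℝ)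
    (hD : ∀ u, (1 + u ^ 2) ^ 2 * ‖deriv (⇑φ) u‖ ≤ D) (δ : ℝ) (hδ : |δ| ≤ 1) (u : ℝ) :
    (1 + u ^ 2) ^ 2 * ‖diffS φ δ u‖ ≤ 9 * D * |δ| := by
  rw [diffS_apply]
  have hp : (0:ℝ) < (1 + u ^ 2) ^ 2 := by positivity
  have hbd : ∀ v ∈ uIcc u (u + δ), ‖deriv (⇑φ) v‖ ≤ 9 * D / (1 + u ^ 2) ^ 2 := by
    intro v hv
    have hv1 : |u - v| ≤ 1 := by
      have := Set.abs_sub_left_of_mem_uIcc hv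
      rw [abs_sub_comm]
      refine this.trans ?_
      simpa using hδ
    rw [le_div_iff₀ hp]
    have h1 : 1 + u ^ 2 ≤ 3 * (1 + v ^ 2) := by
      have : (u - v) ^ 2 ≤ 1 := by rw [← sq_abs]; nlinarith [abs_nonneg (u - v)]
      nlinarith [sq_nonneg (u - 2 * v)]
    have h2 : (1 + u ^ 2) ^ 2 ≤ 9 * (1 + v ^ 2) ^ 2 := by
      have : (1 + u ^ 2) ^ 2 ≤ (3 * (1 + v ^ 2)) ^ 2 := by gcongr
      nlinarith
    have h3 := hD v
    have h4 := mul_le_mul_of_nonneg_right h2 (norm_nonneg (deriv (⇑φ) v))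
    nlinarith
  have := Convex.norm_image_sub_le_of_norm_deriv_le (f := ⇑φ) (fun v _ => φ.differentiableAt) hbd
    (convex_uIcc u (u + δ)) (right_mem_uIcc) (left_mem_uIcc)
  have e : ‖u - (u + δ)‖ = |δ| := by simp
  rw [e] at this
  calc _ ≤ (1 + u ^ 2) ^ 2 * (9 * D / (1 + u ^ 2) ^ 2 * |δ|) := by gcongr
    _ = _ := by field_simp

lemma rot_eq (φ : ℝ → ℂ) (a b : ℝ) (f : ℝ → ℂ) (x : ℝ) :
    rotConv φ a b f x
      = ∫ t, f t * (e2pi (-(a * t)) * (((b - a : ℝ) : ℂ) * φ ((b - a) * (x - t)))) := by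
  unfold rotConv conv phim
  rw [← integral_const_mul]
  congr 1
  funext t
  have : e2pi (-(a * t)) = e2pi (-(a * x)) * e2pi (a * (x - t)) := by
    rw [← e2pi_add]; congr 1; ring
  rw [this]; ring

lemma scale_hi (s h : ℝ) (hh : 0 < h) (n : ℕ) :
    ((2:ℝ) ^ n / h) ^ (-2 * s) = (h ^ s) ^ 2 * (((2:ℝ) ^ (2 * s))⁻¹) ^ n := by
  rw [Real.div_rpow (by positivity) hh.le, ← Real.rpow_pow_comm (by norm_num),
    ← Real.rpow_neg (by norm_num), div_eq_mul_inv, ← Real.rpow_neg hh.le, mul_comm,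
    ← Real.rpow_natCast (h ^ s), ← Real.rpow_mul hh.le]
  congr 2
  · push_cast; ring
  · congr 1; ring

lemma scale_lo (s h : ℝ) (hh : 0 < h) (n : ℕ) :
    ((1 / 2 : ℝ) ^ (n + 1) / h) ^ (-2 * s) = (h ^ s) ^ 2 * ((2:ℝ) ^ (2 * s)) ^ (n + 1) := by
  rw [Real.div_rpow (by positivity) hh.le, ← Real.rpow_pow_comm (by norm_num),
    div_eq_mul_inv, ← Real.rpow_neg hh.le, mul_comm,
    ← Real.rpow_natCast (h ^ s), ← Real.rpow_mul hh.le]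
  congr 2
  · push_cast; ring
  · rw [one_div, Real.inv_rpow (by norm_num), ← Real.rpow_neg (by norm_num)]
    congr 1; ring

/-- uniform boundedness of the rotated family on the homogeneous Hölder space
`Ċ^s = Ḟ^s_{∞∞}`, `0 < s < 1`: if `[f]_s ≤ K` then the rotated pieces
`g_m(x) = e^{-2πi a_m x}(f∗φ_m)(x)` satisfy `(Σ_m |g_m(x)-g_m(y)|²)^{1/2} ≤ C K |x-y|^s`. -/
theorem statement6 (φ : SchwartzMap ℝ ℂ)
    (hφ : Function.support (𝓕 ⇑φ) ⊆ Set.Ioo 0 1)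
    (s : ℝ) (hs0 : 0 < s) (hs1 : s < 1) :
    ∃ C : ℝ, 0 < C ∧ ∀ (N : ℕ) (a b : Fin N → ℝ), Admissible a b →
      ∀ (f : ℝ → ℂ) (K : ℝ),
        (∀ x y : ℝ, ‖f x - f y‖ ≤ K * |x - y| ^ s) →
        ∀ x y : ℝ,
          (∑ m : Fin N,
              ‖rotConv ⇑φ (a m) (b m) f x - rotConv ⇑φ (a m) (b m) f y‖ ^ 2) ^ (1/2 : ℝ)
            ≤ C * K * |x - y| ^ s := by
  obtain ⟨D, hD0, hD⟩ := schwartz_bound φ 0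
  obtain ⟨D', hD'0, hD'⟩ := schwartz_bound φ 1
  simp only [iteratedDeriv_zero, iteratedDeriv_one] at hD hD'
  set q : ℝ := (2:ℝ) ^ (2 * s) with hq
  have hq1 : 1 < q := Real.one_lt_rpow (by norm_num) (by linarith)
  have hq4 : q < 4 := by
    have : q < (2:ℝ) ^ (2:ℝ) := Real.rpow_lt_rpow_of_exponent_lt (by norm_num) (by linarith)
    norm_num at this; exact this
  have hr1 : q⁻¹ < 1 := inv_lt_one_of_one_lt₀ hq1
  have hr2 : q / 4 < 1 := by linarith
  have hr1' : 0 < (1 - q⁻¹)⁻¹ := inv_pos.2 (by linarith)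
  have hr2' : 0 < (1 - q / 4)⁻¹ := inv_pos.2 (by linarith)
  set M : ℝ := 4 * (2 * π ^ 2 * D ^ 2 * (1 - q⁻¹)⁻¹)
    + 2 * π ^ 2 * (9 * D') ^ 2 * q * (1 - q / 4)⁻¹ with hM
  have hM0 : 0 < M := by positivity
  refine ⟨M + 1, by positivity, fun N a b hadm f K hf x y => ?_⟩
  obtain ⟨hab, hzero, hdis⟩ := hadm
  have hK : 0 ≤ K := by
    have := hf 0 1
    norm_num at this
    exact (norm_nonneg _).trans this
  rcases eq_or_ne x y with rfl | hxy
  · have : (0:ℝ) ^ (2:ℝ)⁻¹ = 0 := by apply Real.zero_rpow; norm_num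
    simp [Real.zero_rpow hs0.ne']
  set h := |x - y| with hh
  have hh0 : 0 < h := abs_pos.2 (sub_ne_zero.2 hxy)
  set L : Fin N → ℝ := fun m => b m - a m with hLdef
  have hLp : ∀ m, 0 < L m := fun m => sub_pos.2 (hab m)
  have h0 : ∀ m, -a m / L m ∉ Ioo (0:ℝ) 1 := by
    rintro m ⟨h1, h2⟩
    rw [lt_div_iff₀ (hLp m)] at h1
    rw [div_lt_iff₀ (hLp m)] at h2
    apply hzero m
    simp only [hLdef] at h2
    constructor <;> linarith
  have hd : ∀ m n, m ≠ n → Disjoint (Icc (a m) (a m + L m)) (Icc (a n) (a n + L n)) := by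
    intro m n hmn
    have := hdis m n hmn
    simpa [hLdef] using this
  set T : Fin N → ℝ := fun m =>
    ‖rotConv ⇑φ (a m) (b m) f x - rotConv ⇑φ (a m) (b m) f y‖ ^ 2 with hT
  -- high part
  set H : Finset (Fin N) := Finset.univ.filter fun m => 1 ≤ L m * h with hH
  set Lo : Finset (Fin N) := Finset.univ.filter fun m => ¬ (1 ≤ L m * h) with hLo
  have hκ : ∀ m, ∃ n : ℕ, 1 ≤ L m * h → (2:ℝ) ^ n ≤ L m * h ∧ L m * h < 2 ^ (n + 1) := by
    intro m
    by_cases c : 1 ≤ L m * h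
    · obtain ⟨n, hn⟩ := exists_nat_pow_near c (by norm_num : (1:ℝ) < 2)
      exact ⟨n, fun _ => hn⟩
    · exact ⟨0, fun h => absurd h c⟩
  choose κ hκ using hκ
  have high : ∀ z, ∑ m ∈ H, ‖rotConv ⇑φ (a m) (b m) f z‖ ^ 2
      ≤ 2 * π ^ 2 * D ^ 2 * K ^ 2 * (h ^ s) ^ 2 * (1 - q⁻¹)⁻¹ := by
    intro z
    refine geo_sum H _ κ _ q⁻¹ (by positivity) (by positivity) hr1 fun n => ?_
    have := group_est hs0 hs1 hK hf ((2:ℝ) ^ n / h) z (by positivity)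
      (H.filter fun m => κ m = n) a L (fun _ => φ) (by
        intro m hm
        simp only [hH, Finset.mem_filter, Finset.mem_univ, true_and] at hm
        have h1 := hκ m hm.1
        rw [hm.2] at h1
        refine ⟨(div_le_iff₀ hh0).2 h1.1, ?_⟩
        rw [← mul_div_assoc, le_div_iff₀ hh0]
        have h2 := h1.2.le
        rw [pow_succ] at h2
        linarith) (fun _ _ => hφ) (fun m _ => h0 m) (fun m _ n _ hmn => hd m n hmn) D
        (fun _ _ u => hD u)
    rw [scale_hi s h hh0 n, ← hq] at this
    simp only [rot_eq]
    refine this.trans (le_of_eq (by ring))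
  have hHT : ∑ m ∈ H, T m ≤ 4 * (2 * π ^ 2 * D ^ 2 * K ^ 2 * (h ^ s) ^ 2 * (1 - q⁻¹)⁻¹) := by
    have hx := high x
    have hy := high y
    have : ∑ m ∈ H, T m ≤ ∑ m ∈ H, (2 * ‖rotConv ⇑φ (a m) (b m) f x‖ ^ 2
        + 2 * ‖rotConv ⇑φ (a m) (b m) f y‖ ^ 2) := by
      refine Finset.sum_le_sum fun m _ => ?_
      have h1 := norm_sub_le (rotConv ⇑φ (a m) (b m) f x) (rotConv ⇑φ (a m) (b m) f y)
      have h2 : T m ≤ (‖rotConv ⇑φ (a m) (b m) f x‖ + ‖rotConv ⇑φ (a m) (b m) f y‖) ^ 2 := by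
        simp only [hT]; gcongr
      nlinarith [sq_nonneg (‖rotConv ⇑φ (a m) (b m) f x‖ - ‖rotConv ⇑φ (a m) (b m) f y‖)]
    rw [Finset.sum_add_distrib, ← Finset.mul_sum, ← Finset.mul_sum] at this
    linarith
  -- low part
  have hκ' : ∀ m, ∃ n : ℕ, ¬ (1 ≤ L m * h) →
      (1 / 2 : ℝ) ^ (n + 1) ≤ L m * h ∧ L m * h ≤ (1 / 2) ^ n := by
    intro m
    by_cases c : 1 ≤ L m * h
    · exact ⟨0, fun h => absurd c h⟩
    · obtain ⟨n, hn⟩ := exists_nat_pow_near_of_lt_one (mul_pos (hLp m) hh0) (not_le.1 c).le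
        (by norm_num : (0:ℝ) < 1 / 2) (by norm_num)
      exact ⟨n, fun _ => ⟨hn.1.le, hn.2⟩⟩
  choose κ' hκ' using hκ'
  have hTlow : ∀ m, T m = ‖∫ t, f t * (e2pi (-(a m * t)) *
      ((L m : ℂ) * diffS φ (L m * (y - x)) (L m * (x - t))))‖ ^ 2 := by
    intro m
    have hv : 𝓕 (⇑φ) (-a m / L m) = 0 := by
      by_contra hc
      exact h0 m (hφ hc)
    have hint : ∀ z, Integrable (fun t => f t * (e2pi (-(a m * t)) *
        ((L m : ℂ) * φ (L m * (z - t))))) := by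
      intro z
      obtain ⟨Ψ, hΨ⟩ := exists_mod (polyMul ((1 / L m) ^ 2) φ) (a m) (L m) z (hLp m)
      exact (kern hs0 hs1 hK hf 1 z one_pos φ Ψ (a m) (L m) (hLp m) hv hΨ).1
    simp only [hT, rot_eq]
    rw [← integral_sub (hint x) (hint y)]
    congr 2
    refine integral_congr_ae (Filter.Eventually.of_forall fun t => ?_)
    simp only
    rw [diffS_apply]
    have : L m * (x - t) + L m * (y - x) = L m * (y - t) := by ring
    rw [this]
    ring
  have hLT : ∑ m ∈ Lo, T m
      ≤ 2 * π ^ 2 * (9 * D') ^ 2 * K ^ 2 * (h ^ s) ^ 2 * q * (1 - q / 4)⁻¹ := by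
    refine geo_sum Lo _ κ' _ (q / 4) (by positivity) (by positivity) hr2 fun n => ?_
    have hmem : ∀ m ∈ Lo.filter (fun m => κ' m = n),
        (1 / 2 : ℝ) ^ (n + 1) ≤ L m * h ∧ L m * h ≤ (1 / 2) ^ n := by
      intro m hm
      simp only [hLo, Finset.mem_filter, Finset.mem_univ, true_and] at hm
      have h1 := hκ' m hm.1
      rwa [hm.2] at h1
    have := group_est hs0 hs1 hK hf ((1 / 2 : ℝ) ^ (n + 1) / h) x (by positivity)
      (Lo.filter fun m => κ' m = n) a L (fun m => diffS φ (L m * (y - x))) (by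
        intro m hm
        have h1 := hmem m hm
        refine ⟨(div_le_iff₀ hh0).2 h1.1, ?_⟩
        rw [← mul_div_assoc, le_div_iff₀ hh0]
        have h2 := h1.2
        rw [pow_succ]
        linarith) (fun m _ => diffS_supp φ _ hφ) (fun m _ => h0 m)
        (fun m _ n _ hmn => hd m n hmn) (9 * D' * (1 / 2) ^ n)
        (fun m hm u => by
          have h1 := hmem m hm
          have e : |L m * (y - x)| = L m * h := by
            rw [abs_mul, abs_of_pos (hLp m), abs_sub_comm]
          have h2 : (1 / 2 : ℝ) ^ n ≤ 1 := pow_le_one₀ (by norm_num) (by norm_num)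
          refine (diffS_bound φ D' hD' _ (by rw [e]; linarith) u).trans ?_
          rw [e]
          have := h1.2
          gcongr)
    rw [scale_lo s h hh0 n, ← hq] at this
    simp only [hTlow]
    refine this.trans (le_of_eq ?_)
    have e : ((1 / 2 : ℝ) ^ n) ^ 2 * q ^ n = (q / 4) ^ n := by
      rw [← pow_mul, mul_comm n 2, pow_mul, ← mul_pow]; congr 1; ring
    rw [← e]; ring
  have hsum : ∑ m, T m ≤ ((M + 1) * K * h ^ s) ^ 2 := by
    rw [← Finset.sum_filter_add_sum_filter_not Finset.univ (fun m => 1 ≤ L m * h)]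
    calc _ ≤ 4 * (2 * π ^ 2 * D ^ 2 * K ^ 2 * (h ^ s) ^ 2 * (1 - q⁻¹)⁻¹)
          + 2 * π ^ 2 * (9 * D') ^ 2 * K ^ 2 * (h ^ s) ^ 2 * q * (1 - q / 4)⁻¹ := add_le_add hHT hLT
      _ = M * (K * h ^ s) ^ 2 := by rw [hM]; ring
      _ ≤ (M + 1) ^ 2 * (K * h ^ s) ^ 2 := by
        gcongr
        nlinarith
      _ = _ := by ring
  rw [← Real.sqrt_eq_rpow]
  exact Real.sqrt_le_iff.2 ⟨by positivity, hsum⟩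
end
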